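/- Let Y be a finite set, β > 0, π_ref a probability mass function on Y with π_ref(y) > 0 for all y, and r : Y → ℝ. Define Z = ∑_{y∈Y} π_ref(y)·exp(r(y)/β) and the Gibbs policy π*(y) = π_ref(y)·exp(r(y)/β)/Z. Then: (i) for all y₁, y₂ ∈ Y, β·(log(π*(y₁)/π_ref(y₁)) − log(π*(y₂)/π_ref(y₂))) = r(y₁) − r(y₂); in particular the implicit-reward distillation loss E[(β log(π*(y₁)/π_ref(y₁)) − β log(π*(y₂)/π_ref(y₂)) − (r(y₁) − r(y₂)))²] is zero pointwise; and (ii) if π is any probability mass function on Y with π(y) > 0 for all y such that β·(log(π(y₁)/π_ref(y₁)) − log(π(y₂)/π_ref(y₂))) = r(y₁) − r(y₂) for all y₁, y₂ ∈ Y, then π = π*. -/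

import Mathlib

/-- The log-ratio of a Gibbs weight normalized by `Z` to its base weight. -/
theorem log_gibbs_div {p Z : ℝ} (hp : p ≠ 0) (hZ : Z ≠ 0) (t : ℝ) :
    Real.log (p * Real.exp t / Z / p) = t - Real.log Z := by
  rw [show p * Real.exp t / Z / p = Real.exp t / Z by field_simp,
    Real.log_div (Real.exp_ne_zero t) hZ, Real.log_exp]

/-- A normalized function proportional to `w` is `w` divided by its total mass. -/
theorem eq_div_sum_of_eq_mul {Y : Type*} [Fintype Y] {p w : Y → ℝ} {c : ℝ}
    (h : ∀ y, p y = w y * c) (hp : ∑ y, p y = 1) (y : Y) : p y = w y / ∑ x, w x := by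
  have hc : (∑ x, w x) * c = 1 := by
    rw [Finset.sum_mul, ← hp]
    exact Finset.sum_congr rfl fun x _ => (h x).symm
  rw [h y, div_eq_mul_inv, eq_inv_of_mul_eq_one_right hc]

/-- Theorem 1 (core): the Gibbs policy π* ∝ π_ref·exp(r/β) has implicit reward
differences exactly matching r (so the implicit-reward distillation loss is zero
pointwise), and it is the unique fully supported pmf with this property. -/
theorem gibbs_policy_distillation {Y : Type*} [Fintype Y]
    (β : ℝ) (hβ : 0 < β)
    (πref : Y → ℝ) (href_pos : ∀ y, 0 < πref y) (href_sum : ∑ y, πref y = 1)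
    (r : Y → ℝ)
    (Z : ℝ) (hZ : Z = ∑ y, πref y * Real.exp (r y / β))
    (πstar : Y → ℝ) (hπstar : ∀ y, πstar y = πref y * Real.exp (r y / β) / Z) :
    (∀ y₁ y₂ : Y,
      β * (Real.log (πstar y₁ / πref y₁) - Real.log (πstar y₂ / πref y₂)) = r y₁ - r y₂) ∧
    (∀ y₁ y₂ : Y,
      (β * Real.log (πstar y₁ / πref y₁) - β * Real.log (πstar y₂ / πref y₂)
        - (r y₁ - r y₂)) ^ 2 = 0) ∧
    (∀ π : Y → ℝ, (∀ y, 0 < π y) → (∑ y, π y = 1) →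
      (∀ y₁ y₂ : Y,
        β * (Real.log (π y₁ / πref y₁) - Real.log (π y₂ / πref y₂)) = r y₁ - r y₂) →
      π = πstar) := by
  have hdiff : ∀ y₁ y₂ : Y,
      β * (Real.log (πstar y₁ / πref y₁) - Real.log (πstar y₂ / πref y₂)) = r y₁ - r y₂ := by
    intro y₁ y₂
    have hZ_pos : 0 < Z := hZ ▸ Finset.sum_pos
      (fun y _ => mul_pos (href_pos y) (Real.exp_pos _)) ⟨y₁, Finset.mem_univ y₁⟩
    rw [hπstar, hπstar, log_gibbs_div (href_pos y₁).ne' hZ_pos.ne',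
      log_gibbs_div (href_pos y₂).ne' hZ_pos.ne']
    field_simp
    ring
  refine ⟨hdiff, fun y₁ y₂ => ?_, fun π hπ_pos hπ_sum hπ => ?_⟩
  · rw [← mul_sub, hdiff, sub_self, zero_pow two_ne_zero]
  · funext y
    rw [hπstar, hZ]
    refine eq_div_sum_of_eq_mul (w := fun x => πref x * Real.exp (r x / β))
      (c := Real.exp (Real.log (π y / πref y) - r y / β)) (fun x => ?_) hπ_sum y
    have hlog : r x / β + (Real.log (π y / πref y) - r y / β) = Real.log (π x / πref x) := by
      have h := hπ x y
      field_simp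
      linarith
    rw [mul_assoc, ← Real.exp_add, hlog, Real.exp_log (div_pos (hπ_pos x) (href_pos x)),
      mul_div_cancel₀ _ (href_pos x).ne']
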